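/- arXiv:2507.14982 — 5 statements merged into one kernel-verified Lean document; each statement's English description precedes it below -/
import Mathlib

section
/- Let N_T ≥ 1 and L ≥ 1 be natural numbers, let P > 0, and let G̃_{ij} ∈ ℂ^{N_T×N_T} be Hermitian matrices for 1 ≤ i ≤ j ≤ L. For any V̂ ∈ ℂ^{N_T×N_T} with Tr(V̂ V̂^H) ≤ P, there exist a natural number N ≤ ⌊√(L(L+1)/2)⌋ and a matrix V' ∈ ℂ^{N_T×N} such that Tr(G̃_{ij} V' V'^H) = Tr(G̃_{ij} V̂ V̂^H) for all 1 ≤ i ≤ j ≤ L and Tr(V' V'^H) ≤ P. In other words, in a MIMO radar system (no communication users) measured by the Bayesian Cramér–Rao bound for L real parameters, at most ⌊√(L(L+1)/2)⌋ beamformers achieve the same Bayesian Fisher information as a full set of N_T beamformers. -/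
open Matrix Finset

noncomputable section

/-!
Only `X = V Vᴴ` matters: a positive semidefinite `X` of rank `r` has the form `B Bᴴ` with `B` of
`r` columns, so it suffices to lower the rank of `X` to `√K`, where `K` is the number of
constraints, without changing any of the traces `Tr (H k X)` or increasing `Tr X`.

If `r ^ 2 > K`, then, the Hermitian `r × r` matrices having real dimension `r ^ 2`, some nonzero
Hermitian `D` satisfies `Tr (H k B D Bᴴ) = 0` for all `k`. Up to sign, `D` has a positive eigenvalue
and `Tr (B D Bᴴ) ≥ 0`. With `λ` the largest eigenvalue of `D`, the matrix `1 - λ⁻¹ D` is positive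
semidefinite and singular, so `B (1 - λ⁻¹ D) Bᴴ = X - λ⁻¹ B D Bᴴ` has the same traces against the
`H k`, no larger trace, and rank less than `r`.
-/

section SelfAdjoint

variable {A : Type*} [AddCommGroup A] [Module ℂ A] [StarAddMonoid A] [StarModule ℂ A]

/-- Multiplication by `-i` as a real-linear equivalence from the skew-adjoint to the self-adjoint
elements of a complex star module, showing that both have the same real dimension. -/
def skewAdjointEquivSelfAdjoint : skewAdjoint A ≃ₗ[ℝ] selfAdjoint A :=
  .ofBijective skewAdjoint.negISMul
    ⟨fun a b h => Subtype.ext <| by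
      rw [← skewAdjoint.I_smul_neg_I a, h, skewAdjoint.I_smul_neg_I],
    fun a => ⟨⟨Complex.I • (a : A), Complex.I_smul_mem_skewAdjoint_iff_isSelfAdjoint.2 a.2⟩,
      Subtype.ext <| by simp [skewAdjoint.negISMul, smul_smul]⟩⟩

theorem finrank_real_selfAdjoint [FiniteDimensional ℂ A] :
    Module.finrank ℝ (selfAdjoint A) = Module.finrank ℂ A := by
  have : FiniteDimensional ℝ A := Module.Finite.trans ℂ A
  have : FiniteDimensional ℝ (selfAdjoint A) :=
    inferInstanceAs (FiniteDimensional ℝ (selfAdjoint.submodule ℝ A))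
  have : FiniteDimensional ℝ (skewAdjoint A) :=
    inferInstanceAs (FiniteDimensional ℝ (skewAdjoint.submodule ℝ A))
  have hsum := (StarModule.decomposeProdAdjoint ℝ A).finrank_eq
  rw [Module.finrank_prod, skewAdjointEquivSelfAdjoint.finrank_eq, finrank_real_of_complex] at hsum
  lia

end SelfAdjoint

theorem exists_not_nonpos_of_odd {M N : Type*} [AddCommGroup M] [PartialOrder M]
    [IsOrderedAddMonoid M] [AddCommGroup N] [LinearOrder N] [IsOrderedAddMonoid N]
    {φ : M → N} (hmono : Monotone φ) (hodd : φ.Odd) {x : M} (hx : x ≠ 0) :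
    ∃ y, (y = x ∨ y = -x) ∧ ¬ y ≤ 0 ∧ 0 ≤ φ y := by
  wlog hφ : 0 ≤ φ x generalizing x
  · have hφ' : 0 ≤ φ (-x) := by simpa only [hodd x, neg_nonneg] using (not_le.1 hφ).le
    obtain ⟨y, hy, hy'⟩ := this (neg_ne_zero.2 hx) hφ'
    exact ⟨y, by simpa [or_comm] using hy, hy'⟩
  by_cases hneg : x ≤ 0
  · refine ⟨-x, .inr rfl, fun h => hx (hneg.antisymm (neg_nonpos.1 h)), ?_⟩
    simpa only [hodd.map_zero] using hmono (neg_nonneg.2 hneg)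
  · exact ⟨x, .inl rfl, hneg, hφ⟩

open ContinuousFunctionalCalculus in
theorem exists_pos_mem_spectrum_le_algebraMap {A : Type*} [TopologicalSpace A] [Ring A]
    [StarRing A] [PartialOrder A] [StarOrderedRing A] [Algebra ℝ A] [NonnegSpectrumClass ℝ A]
    [ContinuousFunctionalCalculus ℝ A IsSelfAdjoint]
    {a : A} (ha : IsSelfAdjoint a) (hpos : ¬ a ≤ 0) :
    ∃ r : ℝ, 0 < r ∧ r ∈ spectrum ℝ a ∧ a ≤ algebraMap ℝ A r := by
  have : Nontrivial A := nontrivial_of_ne a 0 fun h => hpos h.le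
  have hcompact : IsCompact (spectrum ℝ a) := isCompact_iff_compactSpace.mpr inferInstance
  obtain ⟨r, hr, hmax⟩ := hcompact.exists_isMaxOn
    (ContinuousFunctionalCalculus.spectrum_nonempty a ha) continuousOn_id
  refine ⟨r, ?_, hr, le_algebraMap_of_spectrum_le hmax⟩
  by_contra! hr0
  apply hpos
  rw [← map_zero (algebraMap ℝ A)]
  exact le_algebraMap_of_spectrum_le fun x hx => (hmax hx).trans hr0

theorem rank_lt_card_of_not_isUnit {n K : Type*} [Fintype n] [DecidableEq n] [Field K]
    {A : Matrix n n K} (hA : ¬ IsUnit A) : A.rank < Fintype.card n := by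
  rw [← Module.finrank_fintype_fun_eq_card K]
  refine Submodule.finrank_lt fun hrange => hA ?_
  exact mulVec_surjective_iff_isUnit.1 (LinearMap.range_eq_top.1 hrange)

theorem im_trace_mul_eq_zero {n : Type*} [Fintype n] {A B : Matrix n n ℂ}
    (hA : A.IsHermitian) (hB : B.IsHermitian) : (A * B).trace.im = 0 := by
  rw [← Complex.conj_eq_iff_im, starRingEnd_apply, ← trace_conjTranspose, conjTranspose_mul,
    hA.eq, hB.eq, trace_mul_comm]

theorem exists_isHermitian_ne_zero_trace_mul_eq_zero {ι n : Type*} [Fintype ι] [Fintype n]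
    {H : ι → Matrix n n ℂ} (hH : ∀ k, (H k).IsHermitian)
    (hcard : Fintype.card ι < Fintype.card n ^ 2) :
    ∃ D : Matrix n n ℂ, D.IsHermitian ∧ D ≠ 0 ∧ ∀ k, (H k * D).trace = 0 := by
  let f : selfAdjoint (Matrix n n ℂ) →ₗ[ℝ] ι → ℝ :=
    { toFun D k := (H k * D).trace.re
      map_add' D E := by ext; simp [mul_add]
      map_smul' c D := by ext; simp }
  have : FiniteDimensional ℝ (selfAdjoint (Matrix n n ℂ)) :=
    inferInstanceAs (FiniteDimensional ℝ (selfAdjoint.submodule ℝ (Matrix n n ℂ)))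
  have hker : LinearMap.ker f ≠ ⊥ := LinearMap.ker_ne_bot_of_finrank_lt <| by
    simpa [finrank_real_selfAdjoint, Module.finrank_matrix, ← sq] using hcard
  obtain ⟨D, hD, hD0⟩ := Submodule.exists_mem_ne_zero_of_ne_bot hker
  refine ⟨D, D.2, by simpa using hD0, fun k => ?_⟩
  exact Complex.ext (congrFun hD k) (im_trace_mul_eq_zero (hH k) D.2)

section PosSemidef

open scoped ComplexOrder MatrixOrder

theorem submatrix_mul_conjTranspose_of_col_eq_zero {m n o R : Type*} [Fintype n] [Fintype o]
    [NonUnitalNonAssocSemiring R] [StarRing R] {C : Matrix m n R} {e : o → n}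
    (he : Function.Injective e) (hzero : ∀ j ∉ Set.range e, C.col j = 0) :
    C.submatrix id e * (C.submatrix id e)ᴴ = C * Cᴴ := by
  ext i k
  rw [mul_apply, mul_apply]
  refine Fintype.sum_of_injective e he _ _ (fun j hj => ?_) (fun _ => rfl)
  have hij : C i j = 0 := congrFun (hzero j hj) i
  rw [hij, zero_mul]

theorem exists_mul_conjTranspose_eq_of_posSemidef {n 𝕜 : Type*} [Fintype n] [RCLike 𝕜]
    {X : Matrix n n 𝕜} (hX : X.PosSemidef) :
    ∃ B : Matrix n (Fin X.rank) 𝕜, B * Bᴴ = X := by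
  classical
  have hH := hX.isHermitian
  let e := Fintype.equivFinOfCardEq hH.rank_eq_card_non_zero_eigs.symm
  let U : Matrix n n 𝕜 := hH.eigenvectorUnitary
  let S : Matrix n n 𝕜 := diagonal fun i => (√(hH.eigenvalues i) : 𝕜)
  have hS : S * Sᴴ = diagonal (RCLike.ofReal ∘ hH.eigenvalues) := by
    have hsqrt (i : n) : (√(hH.eigenvalues i) : 𝕜) * √(hH.eigenvalues i) = hH.eigenvalues i := by
      exact_mod_cast Real.mul_self_sqrt (hX.eigenvalues_nonneg i)
    simp [S, diagonal_conjTranspose, hsqrt, Function.comp_def, Pi.star_def]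
  refine ⟨(U * S).submatrix id (fun k => e.symm k), ?_⟩
  calc (U * S).submatrix id (fun k => e.symm k) * ((U * S).submatrix id (fun k => e.symm k))ᴴ
      = U * S * (U * S)ᴴ := by
        refine submatrix_mul_conjTranspose_of_col_eq_zero
          (Subtype.val_injective.comp e.symm.injective) fun j hj => ?_
        have hj : hH.eigenvalues j = 0 := by
          by_contra hne
          exact hj ⟨e ⟨j, hne⟩, by simp⟩
        ext i
        simp [S, hj]
    _ = U * (S * Sᴴ) * Uᴴ := by simp only [conjTranspose_mul, Matrix.mul_assoc]
    _ = X := by rw [hS]; exact hH.spectral_theorem.symm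

theorem exists_isHermitian_not_nonpos_trace_eq_zero {ι m n : Type*} [Fintype ι] [Fintype m]
    [Fintype n] {H : ι → Matrix m m ℂ} (hH : ∀ k, (H k).IsHermitian) (B : Matrix m n ℂ)
    (hcard : Fintype.card ι < Fintype.card n ^ 2) :
    ∃ D : Matrix n n ℂ, D.IsHermitian ∧ ¬ D ≤ 0 ∧ 0 ≤ (B * D * Bᴴ).trace.re ∧
      ∀ k, (H k * (B * D * Bᴴ)).trace = 0 := by
  obtain ⟨D, hD, hD0, htrace⟩ := exists_isHermitian_ne_zero_trace_mul_eq_zero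
    (fun k => isHermitian_conjTranspose_mul_mul B (hH k)) hcard
  have htrace' (k : ι) : (H k * (B * D * Bᴴ)).trace = 0 := by
    rw [← htrace k, ← Matrix.mul_assoc, trace_mul_comm]
    simp only [Matrix.mul_assoc]
  have hmono : Monotone fun E : Matrix n n ℂ => (B * E * Bᴴ).trace.re := fun E F hEF => by
    have hnonneg := ((le_iff.1 hEF).mul_mul_conjTranspose_same B).trace_nonneg
    rw [Matrix.mul_sub, Matrix.sub_mul, trace_sub, sub_nonneg] at hnonneg
    exact hnonneg.1
  obtain ⟨E, rfl | rfl, hE, hpower⟩ := exists_not_nonpos_of_odd hmono (fun E => by simp) hD0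
  · exact ⟨E, hD, hE, hpower, htrace'⟩
  · exact ⟨-D, hD.neg, hE, hpower, fun k => by simp [htrace']⟩

theorem exists_posSemidef_rank_lt_trace_eq {ι m : Type*} [Fintype ι] [Fintype m]
    {H : ι → Matrix m m ℂ} (hH : ∀ k, (H k).IsHermitian) {X : Matrix m m ℂ} (hX : X.PosSemidef)
    (hcard : Fintype.card ι < X.rank ^ 2) :
    ∃ Y : Matrix m m ℂ, Y.PosSemidef ∧ Y.rank < X.rank ∧
      (∀ k, (H k * Y).trace = (H k * X).trace) ∧ Y.trace.re ≤ X.trace.re := by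
  obtain ⟨B, hB⟩ := exists_mul_conjTranspose_eq_of_posSemidef hX
  obtain ⟨D, hD, hpos, hpower, htrace⟩ :=
    exists_isHermitian_not_nonpos_trace_eq_zero hH B (by rwa [Fintype.card_fin])
  obtain ⟨r, hr, hspec, hle⟩ := exists_pos_mem_spectrum_le_algebraMap hD.isSelfAdjoint hpos
  let M := algebraMap ℝ _ r - D
  have hY : r⁻¹ • (B * M * Bᴴ) = X - r⁻¹ • (B * D * Bᴴ) := by
    simp [M, Matrix.mul_sub, Matrix.sub_mul, smul_sub, Algebra.algebraMap_eq_smul_one, smul_smul,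
      hr.ne', hB]
  refine ⟨r⁻¹ • (B * M * Bᴴ), ?_, ?_, fun k => ?_, ?_⟩
  · exact ((le_iff.1 hle).mul_mul_conjTranspose_same B).smul (inv_nonneg.2 hr.le)
  · calc (r⁻¹ • (B * M * Bᴴ)).rank = (r⁻¹ • B * M * Bᴴ).rank := by simp only [smul_mul]
      _ ≤ (r⁻¹ • B * M).rank := rank_mul_le_left ..
      _ ≤ M.rank := rank_mul_le_right ..
      _ < X.rank := by simpa using rank_lt_card_of_not_isUnit (spectrum.mem_iff.1 hspec)
  · rw [hY, Matrix.mul_sub, Matrix.mul_smul, trace_sub, trace_smul, htrace, smul_zero, sub_zero]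
  · rw [hY, trace_sub, trace_smul, Complex.sub_re, Complex.smul_re]
    exact sub_le_self _ (smul_nonneg (inv_nonneg.2 hr.le) hpower)

theorem exists_posSemidef_rank_sq_le_card_trace_eq {ι m : Type*} [Fintype ι] [Fintype m]
    {H : ι → Matrix m m ℂ} (hH : ∀ k, (H k).IsHermitian) {X : Matrix m m ℂ} (hX : X.PosSemidef) :
    ∃ Y : Matrix m m ℂ, Y.PosSemidef ∧ Y.rank ^ 2 ≤ Fintype.card ι ∧
      (∀ k, (H k * Y).trace = (H k * X).trace) ∧ Y.trace.re ≤ X.trace.re := by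
  induction hrank : X.rank using Nat.strong_induction_on generalizing X with
  | _ r ih =>
    subst hrank
    by_cases hcard : X.rank ^ 2 ≤ Fintype.card ι
    · exact ⟨X, hX, hcard, fun _ => rfl, le_rfl⟩
    obtain ⟨Z, hZ, hlt, hZtrace, hZpower⟩ :=
      exists_posSemidef_rank_lt_trace_eq hH hX (not_le.1 hcard)
    obtain ⟨Y, hY, hYrank, hYtrace, hYpower⟩ := ih Z.rank hlt hZ rfl
    exact ⟨Y, hY, hYrank, fun k => (hYtrace k).trans (hZtrace k), hYpower.trans hZpower⟩

theorem radar_bound_BCRB_general {ι m n : Type*} [Fintype ι] [Fintype m] [Fintype n]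
    {H : ι → Matrix m m ℂ} (hH : ∀ k, (H k).IsHermitian) (V : Matrix m n ℂ) :
    ∃ N ≤ Nat.sqrt (Fintype.card ι), ∃ V' : Matrix m (Fin N) ℂ,
      (∀ k, (H k * (V' * V'ᴴ)).trace = (H k * (V * Vᴴ)).trace) ∧
        (V' * V'ᴴ).trace.re ≤ (V * Vᴴ).trace.re := by
  obtain ⟨Y, hY, hrank, htrace, hpower⟩ :=
    exists_posSemidef_rank_sq_le_card_trace_eq hH (posSemidef_self_mul_conjTranspose V)
  obtain ⟨V', hV'⟩ := exists_mul_conjTranspose_eq_of_posSemidef hY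
  exact ⟨Y.rank, Nat.le_sqrt'.2 hrank, V', by rwa [hV'], by rwa [hV']⟩

end PosSemidef

theorem card_subtype_fst_le_snd (α : Type*) [Fintype α] [LinearOrder α] :
    Fintype.card {p : α × α // p.1 ≤ p.2} =
      Fintype.card α * (Fintype.card α + 1) / 2 := by
  rw [← Fintype.card_congr Sym2.sortEquiv, Sym2.card, Nat.choose_two_right, Nat.add_sub_cancel,
    mul_comm]

/-- MIMO radar (no communication users), BCRB metric for `L` real parameters:
at most `⌊√(L(L+1)/2)⌋` beamformers achieve the same Bayesian Fisher information
as a full set of `N_T` beamformers, within the same power budget. -/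
theorem radar_bound_BCRB
    (NT L : ℕ) (hNT : 1 ≤ NT) (hL : 1 ≤ L)
    (P : ℝ) (hP : 0 < P)
    (G : Fin L → Fin L → Matrix (Fin NT) (Fin NT) ℂ)
    (hG : ∀ i j : Fin L, i ≤ j → (G i j).IsHermitian)
    (Vhat : Matrix (Fin NT) (Fin NT) ℂ)
    (hpow : (Matrix.trace (Vhat * Vhatᴴ)).re ≤ P) :
    ∃ N : ℕ, N ≤ Nat.sqrt (L * (L + 1) / 2) ∧
      ∃ V' : Matrix (Fin NT) (Fin N) ℂ,
        (∀ i j : Fin L, i ≤ j →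
          Matrix.trace (G i j * (V' * V'ᴴ)) = Matrix.trace (G i j * (Vhat * Vhatᴴ))) ∧
        (Matrix.trace (V' * V'ᴴ)).re ≤ P := by
  obtain ⟨N, hN, V', htrace, hpower⟩ := radar_bound_BCRB_general
    (fun p : {p : Fin L × Fin L // p.1 ≤ p.2} => hG p.1.1 p.1.2 p.2) Vhat
  rw [card_subtype_fst_le_snd, Fintype.card_fin] at hN
  exact ⟨N, hN, V', fun i j hij => htrace ⟨(i, j), hij⟩, hpower.trans hpow⟩

end
end

section
/- Let N_T ≥ 1, K ≥ 0, N > K, and m ≥ 0 be natural numbers with N² > K² + m, let h_1,…,h_K ∈ ℂ^{N_T}, and let A_1,…,A_m ∈ ℂ^{N_T×N_T} be Hermitian matrices. Suppose V̂ = [v̂_1,…,v̂_K, V̂_s] ∈ ℂ^{N_T×N} (so V̂_s has N−K columns) satisfies h_k^H V̂_s = 0 for every k. Then there exist a natural number N' with K ≤ N' < N, matrices U_c ∈ ℂ^{(N−K)×K} and U_s ∈ ℂ^{(N−K)×(N'−K)}, such that the matrix V' = V̂ U ∈ ℂ^{N_T×N'}, where U is the N×N' block matrix with top-left block I_K, top-right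 block 0, bottom-left block U_c and bottom-right block U_s, satisfies: (i) Tr(A_i V' V'^H) = Tr(A_i V̂ V̂^H) for all i = 1,…,m; (ii) h_k^H v'_j = h_k^H v̂_j for all k and all j = 1,…,K, and h_k^H V'_s = 0 for all k, where V' = [v'_1,…,v'_K, V'_s]. In particular V' has strictly fewer columns than V̂ and attains exactly the same NIC-SINR values and the same quadratic sensing quantities. -/
open Matrix Finset

noncomputable section

/-- Transmit covariance `V Vᴴ` of the beamforming matrix `V = [v₁,…,v_K, V_s]`
with communication beams `v k` and sensing block `Vs`. -/
def totalCov {nT K Ns : ℕ} (v : Fin K → (Fin nT → ℂ))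
    (Vs : Matrix (Fin nT) (Fin Ns) ℂ) : Matrix (Fin nT) (Fin nT) ℂ :=
  (∑ k, Matrix.vecMulVec (v k) (star (v k))) + Vs * Vsᴴ

/-!
If `V' = V U`, then `Tr (A V' V'ᴴ) = Tr (G (U Uᴴ))` with `G = Vᴴ A V`, so it suffices to replace the
identity by a singular matrix `S = U Uᴴ`, with `U` of the prescribed block shape, on which all the
functionals `Tr (Gᵢ ·)` take the same values. The homogeneous conditions "the top left `K × K` block
of `X` vanishes and `Tr (Gᵢ X) = 0`" are `K² + m` complex linear equations on the `N²`-dimensional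
space of `N × N` matrices; the solution space is stable under `ᴴ`, hence contains a Hermitian
`X ≠ 0`. Moving from the identity along `X` until the boundary of the positive semidefinite cone
gives a singular `S = 1 - t X ≥ 0` whose top left block is still the identity. Its Schur complement
`S₂₂ - S₂₁ S₂₁ᴴ` is positive semidefinite and singular, so it is `W Wᴴ` with one column fewer, and
`U = [[1, 0], [S₂₁, W]]`.
-/

open scoped ComplexStarModule in
theorem exists_isSelfAdjoint_mem_ne_zero {E : Type*} [AddCommGroup E] [Module ℂ E]
    [StarAddMonoid E] [StarModule ℂ E] {p : Submodule ℂ E} (hstar : ∀ x ∈ p, star x ∈ p)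
    (hp : p ≠ ⊥) : ∃ x ∈ p, IsSelfAdjoint x ∧ x ≠ 0 := by
  obtain ⟨x, hx, hx0⟩ := p.ne_bot_iff.mp hp
  by_cases hre : (ℜ x : E) = 0
  · have him : (ℑ x : E) ≠ 0 := fun him ↦ hx0 <| by
      rw [← realPart_add_I_smul_imaginaryPart x, hre, him, smul_zero, add_zero]
    refine ⟨ℑ x, ?_, (ℑ x).2, him⟩
    rw [imaginaryPart_apply_coe]
    exact p.smul_mem _ (p.smul_of_tower_mem _ (p.sub_mem hx (hstar x hx)))
  · refine ⟨ℜ x, ?_, (ℜ x).2, hre⟩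
    rw [realPart_apply_coe]
    exact p.smul_of_tower_mem _ (p.add_mem hx (hstar x hx))

theorem star_trace_mul_of_isHermitian {n R : Type*} [Fintype n] [CommSemiring R]
    [StarRing R] {G : Matrix n n R} (hG : G.IsHermitian) (X : Matrix n n R) :
    star (trace (G * X)) = trace (G * Xᴴ) := by
  rw [← trace_conjTranspose, conjTranspose_mul, hG.eq, trace_mul_comm]

section PosSemidef

open scoped ComplexOrder Pointwise

variable {l m n p R 𝕜 : Type*} [Fintype n]

theorem submatrix_val_mul_submatrix_val [NonUnitalNonAssocSemiring R] {q : n → Prop}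
    [DecidablePred q] {A : Matrix l n R} (hA : ∀ i j, ¬q j → A i j = 0) (B : Matrix n m R) :
    A.submatrix id (Subtype.val (p := q)) * B.submatrix (Subtype.val (p := q)) id = A * B := by
  ext i k
  have hcompl : ∑ j : {j // ¬q j}, A i j * B j k = 0 :=
    sum_eq_zero fun j _ ↦ by rw [hA i j j.2, zero_mul]
  rw [mul_apply, mul_apply, ← Fintype.sum_subtype_add_sum_subtype q, hcompl, add_zero]
  rfl

theorem rank_lt_card_of_not_isUnit_s10 [Field R] [DecidableEq n] {S : Matrix n n R}
    (hS : ¬IsUnit S) : S.rank < Fintype.card n := by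
  refine S.rank_le_card_width.lt_of_ne fun hrank ↦ hS ?_
  rw [← mulVec_surjective_iff_isUnit, ← coe_mulVecLin, ← LinearMap.range_eq_top]
  exact Submodule.eq_top_of_finrank_eq (hrank.trans (Module.finrank_fintype_fun_eq_card R).symm)

theorem exists_posSemidef_one_sub_smul_not_isUnit [RCLike 𝕜] [DecidableEq n] {X : Matrix n n 𝕜}
    (hX : X.IsHermitian) (hne : X ≠ 0) :
    ∃ t : ℝ, (1 - t • X).PosSemidef ∧ ¬IsUnit (1 - t • X) := by
  have heig : hX.eigenvalues ≠ 0 := hX.eigenvalues_eq_zero_iff.not.mpr hne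
  obtain ⟨i₀, hi₀⟩ := Function.ne_iff.mp heig
  obtain ⟨i, -, hmax⟩ := exists_max_image univ (fun i ↦ |hX.eigenvalues i|) ⟨i₀, mem_univ i₀⟩
  have hpos : 0 < |hX.eigenvalues i| := (abs_pos.mpr hi₀).trans_le (hmax i₀ (mem_univ i₀))
  let t : ℝˣ := (Units.mk0 _ (abs_pos.mp hpos))⁻¹
  have hspec : spectrum ℝ (1 - (t : ℝ) • X) = Set.range fun j ↦ 1 - t * hX.eigenvalues j := by
    change spectrum ℝ (1 - t • X) = _
    rw [← map_one (algebraMap ℝ (Matrix n n 𝕜)), ← spectrum.singleton_sub_eq,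
      spectrum.unit_smul_eq_smul, hX.spectrum_real_eq_range_eigenvalues, Set.singleton_sub,
      ← Set.range_smul, ← Set.range_comp]
    rfl
  have hherm : (1 - (t : ℝ) • X).IsHermitian :=
    isHermitian_one.sub (hX.smul (IsSelfAdjoint.all _))
  refine ⟨t, hherm.posSemidef_iff_eigenvalues_nonneg.mpr fun j ↦ ?_,
    (spectrum.zero_mem_iff ℝ).mp ?_⟩
  · obtain ⟨l, hl⟩ := hspec ▸ hherm.eigenvalues_mem_spectrum_real j
    rw [← hl]
    have : |t * hX.eigenvalues l| ≤ 1 := by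
      rw [abs_mul, Units.val_inv_eq_inv_val, Units.val_mk0, abs_inv, inv_mul_le_one₀ hpos]
      exact hmax l (mem_univ l)
    exact sub_nonneg.mpr (abs_le.mp this).2
  · rw [hspec]
    exact ⟨i, sub_eq_zero.mpr (Units.inv_mul (Units.mk0 _ (abs_pos.mp hpos))).symm⟩

theorem exists_mul_conjTranspose_eq_and_col_eq_zero [RCLike 𝕜] [DecidableEq n]
    {S : Matrix n n 𝕜} (hS : S.PosSemidef) :
    ∃ B : Matrix n n 𝕜, B * Bᴴ = S ∧ ∀ i j, hS.isHermitian.eigenvalues j = 0 → B i j = 0 := by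
  have hherm := hS.isHermitian
  refine ⟨hherm.eigenvectorUnitary * diagonal fun i ↦ (√(hherm.eigenvalues i) : 𝕜), ?_,
    fun i j hj ↦ by simp [hj]⟩
  have hsqrt : (diagonal fun i ↦ (√(hherm.eigenvalues i) : 𝕜)) *
      (diagonal fun i ↦ (√(hherm.eigenvalues i) : 𝕜))ᴴ
        = diagonal (RCLike.ofReal ∘ hherm.eigenvalues) := by
    rw [diagonal_conjTranspose, diagonal_mul_diagonal]
    congr! with i
    simp [← RCLike.ofReal_mul, Real.mul_self_sqrt (hS.eigenvalues_nonneg i)]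
  conv_rhs => rw [hherm.spectral_theorem, Unitary.conjStarAlgAut_apply, ← hsqrt]
  simp only [conjTranspose_mul, star_eq_conjTranspose, Matrix.mul_assoc]

theorem exists_mul_conjTranspose_eq_one_of_card_le [Fintype p] [DecidableEq n] [Semiring R]
    [StarRing R] (h : Fintype.card n ≤ Fintype.card p) : ∃ E : Matrix n p R, E * Eᴴ = 1 := by
  classical
  obtain ⟨e⟩ := Function.Embedding.nonempty_of_card_le h
  refine ⟨(1 : Matrix p p R).submatrix e id, ?_⟩
  rw [conjTranspose_submatrix, conjTranspose_one,
    ← submatrix_mul _ _ _ _ _ Function.bijective_id, Matrix.one_mul, submatrix_one e e.injective]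

theorem exists_mul_conjTranspose_eq_of_rank_le [RCLike 𝕜] [Fintype p] {S : Matrix n n 𝕜}
    (hS : S.PosSemidef) (hrank : S.rank ≤ Fintype.card p) :
    ∃ W : Matrix n p 𝕜, W * Wᴴ = S := by
  classical
  obtain ⟨B, hB, hcol⟩ := exists_mul_conjTranspose_eq_and_col_eq_zero hS
  rw [hS.isHermitian.rank_eq_card_non_zero_eigs] at hrank
  obtain ⟨E, hE⟩ := exists_mul_conjTranspose_eq_one_of_card_le (R := 𝕜) hrank
  refine ⟨B.submatrix id (Subtype.val (p := (hS.isHermitian.eigenvalues · ≠ 0))) * E, ?_⟩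
  rw [conjTranspose_mul, Matrix.mul_assoc, ← Matrix.mul_assoc E, hE, Matrix.one_mul,
    conjTranspose_submatrix,
    submatrix_val_mul_submatrix_val (fun i j hj ↦ hcol i j (not_not.mp hj)), hB]

end PosSemidef

section BlockTransform

open scoped ComplexOrder

variable {a m n p ι R 𝕜 : Type*}

/-- The transformation `U = [[I, 0], [C, W]]` of beamforming matrices `V ↦ V U`: the columns of `C`
say which combination of sensing beams is added to each communication beam, those of `W` how the
sensing beams are recombined. The rows are indexed by the old beams, the columns by the new ones. -/
def blockTransform [Zero R] [One R] [DecidableEq m] (C : Matrix n m R) (W : Matrix n p R) :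
    Matrix (m ⊕ n) (m ⊕ p) R :=
  fromBlocks 1 0 C W

theorem exists_isHermitian_toBlocks₁₁_eq_zero_trace_mul_eq_zero [Fintype m] [Fintype n] [Fintype ι]
    (hcard : Fintype.card m ^ 2 + Fintype.card ι < Fintype.card (m ⊕ n) ^ 2)
    (G : ι → Matrix (m ⊕ n) (m ⊕ n) ℂ) (hG : ∀ i, (G i).IsHermitian) :
    ∃ X : Matrix (m ⊕ n) (m ⊕ n) ℂ, X.IsHermitian ∧ X ≠ 0 ∧ X.toBlocks₁₁ = 0 ∧
      ∀ i, trace (G i * X) = 0 := by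
  let constraints : Matrix (m ⊕ n) (m ⊕ n) ℂ →ₗ[ℂ] Matrix m m ℂ × (ι → ℂ) :=
    { toFun X := (X.toBlocks₁₁, fun i ↦ trace (G i * X))
      map_add' X Y := by
        ext <;> simp [toBlocks₁₁, Matrix.mul_add]
      map_smul' c X := by
        ext <;> simp [toBlocks₁₁] }
  have hker : LinearMap.ker constraints ≠ ⊥ := LinearMap.ker_ne_bot_of_finrank_lt <| by
    simpa [Module.finrank_matrix, sq] using hcard
  have mem_ker {X} : X ∈ LinearMap.ker constraints ↔
      X.toBlocks₁₁ = 0 ∧ ∀ i, trace (G i * X) = 0 := by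
    rw [LinearMap.mem_ker, Prod.ext_iff, funext_iff]; rfl
  have star_mem_ker : ∀ X ∈ LinearMap.ker constraints, star X ∈ LinearMap.ker constraints := by
    simp only [mem_ker]
    rintro X ⟨hblock, htrace⟩
    refine ⟨?_, fun i ↦ ?_⟩
    · exact (congrArg conjTranspose hblock).trans conjTranspose_zero
    · rw [star_eq_conjTranspose, ← star_trace_mul_of_isHermitian (hG i), htrace i, star_zero]
  obtain ⟨X, hX, hherm, hne⟩ := exists_isSelfAdjoint_mem_ne_zero star_mem_ker hker
  exact ⟨X, hherm, hne, mem_ker.mp hX⟩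

theorem exists_blockTransform_mul_conjTranspose_eq [RCLike 𝕜] [Fintype m] [Fintype n]
    [Fintype p] [DecidableEq m] [DecidableEq n]
    {S : Matrix (m ⊕ n) (m ⊕ n) 𝕜} (hS : S.PosSemidef) (hunit : ¬IsUnit S)
    (hblock : S.toBlocks₁₁ = 1) (hcard : Fintype.card n ≤ Fintype.card p + 1) :
    ∃ (C : Matrix n m 𝕜) (W : Matrix n p 𝕜), blockTransform C W * (blockTransform C W)ᴴ = S := by
  obtain ⟨B, C, D, rfl⟩ : ∃ B C D, S = fromBlocks 1 B C D :=
    ⟨_, _, _, by rw [← hblock, fromBlocks_toBlocks]⟩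
  obtain rfl : B = Cᴴ := (isHermitian_fromBlocks_iff.mp hS.isHermitian).2.2.1.symm ▸ rfl
  let _ : Invertible (1 : Matrix m m 𝕜) := invertibleOne
  have hschur : (D - C * Cᴴ).PosSemidef := by
    simpa using (PosDef.fromBlocks₁₁ Cᴴ D PosDef.one).mp (by simpa using hS)
  have hsing : ¬IsUnit (D - C * Cᴴ) := by
    simpa [isUnit_fromBlocks_iff_of_invertible₁₁] using hunit
  obtain ⟨W, hW⟩ := exists_mul_conjTranspose_eq_of_rank_le (p := p) hschur <|
    Nat.le_of_lt_succ ((rank_lt_card_of_not_isUnit_s10 hsing).trans_le hcard)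
  refine ⟨C, W, ?_⟩
  rw [blockTransform, fromBlocks_conjTranspose, fromBlocks_multiply]
  simp [hW]

theorem exists_blockTransform_trace_eq [Fintype m] [Fintype n] [Fintype p] [Fintype ι]
    [DecidableEq m]
    (hcount : Fintype.card m ^ 2 + Fintype.card ι < Fintype.card (m ⊕ n) ^ 2)
    (hcard : Fintype.card n ≤ Fintype.card p + 1)
    (G : ι → Matrix (m ⊕ n) (m ⊕ n) ℂ) (hG : ∀ i, (G i).IsHermitian) :
    ∃ (C : Matrix n m ℂ) (W : Matrix n p ℂ), ∀ i,
      trace ((blockTransform C W)ᴴ * G i * blockTransform C W) = trace (G i) := by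
  classical
  obtain ⟨X, hX, hne, hblock, htrace⟩ :=
    exists_isHermitian_toBlocks₁₁_eq_zero_trace_mul_eq_zero hcount G hG
  obtain ⟨t, hpos, hsing⟩ := exists_posSemidef_one_sub_smul_not_isUnit hX hne
  have hblock' : (1 - t • X).toBlocks₁₁ = 1 := by
    have : (1 - t • X).toBlocks₁₁ = 1 - t • X.toBlocks₁₁ := by
      ext; simp [toBlocks₁₁, one_apply]
    rw [this, hblock, smul_zero, sub_zero]
  obtain ⟨C, W, hCW⟩ := exists_blockTransform_mul_conjTranspose_eq (p := p) hpos hsing hblock' hcard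
  refine ⟨C, W, fun i ↦ ?_⟩
  rw [Matrix.mul_assoc, trace_mul_comm, Matrix.mul_assoc, hCW, Matrix.mul_sub,
    Matrix.mul_one, Matrix.mul_smul, trace_sub, trace_smul,
    htrace i, smul_zero, sub_zero]

/-- The beamforming matrix `V = [v₁,…,v_K, V_s]`. Its columns are indexed by the sum of the index
types of the communication and the sensing beams, which keeps the two blocks apart. -/
def beamMatrix (v : m → a → R) (Vs : Matrix a n R) : Matrix a (m ⊕ n) R :=
  fromCols (of v)ᵀ Vs

theorem beamMatrix_mul_blockTransform [Semiring R] [Fintype m] [Fintype n] [DecidableEq m]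
    (v : m → a → R) (Vs : Matrix a n R) (C : Matrix n m R) (W : Matrix n p R) :
    beamMatrix v Vs * blockTransform C W
      = beamMatrix (fun k ↦ v k + Vs *ᵥ fun j ↦ C j k) (Vs * W) := by
  rw [beamMatrix, blockTransform, fromCols_mul_fromBlocks, Matrix.mul_one, Matrix.mul_zero,
    zero_add]
  rfl

end BlockTransform

theorem totalCov_eq_beamMatrix_mul_conjTranspose {nT K Ns : ℕ} (v : Fin K → Fin nT → ℂ)
    (Vs : Matrix (Fin nT) (Fin Ns) ℂ) :
    totalCov v Vs = beamMatrix v Vs * (beamMatrix v Vs)ᴴ := by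
  rw [totalCov, beamMatrix, conjTranspose_fromCols_eq_fromRows_conjTranspose,
    fromCols_mul_fromRows]
  congr 1
  ext i j
  simp [Matrix.sum_apply, vecMulVec_apply, mul_apply]

theorem trace_mul_totalCov {nT K Ns : ℕ} (A : Matrix (Fin nT) (Fin nT) ℂ)
    (v : Fin K → Fin nT → ℂ) (Vs : Matrix (Fin nT) (Fin Ns) ℂ) :
    trace (A * totalCov v Vs) = trace ((beamMatrix v Vs)ᴴ * A * beamMatrix v Vs) := by
  rw [totalCov_eq_beamMatrix_mul_conjTranspose, ← Matrix.mul_assoc, trace_mul_comm,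
    ← Matrix.mul_assoc]

/-- Rank-reduction transformation step for the no-interference-cancellation case:
if `N² > K² + m` and the sensing block is orthogonal to all communication channels,
the total number of beamformers can be strictly reduced by a lower-block-triangular
transformation `U = [[I_K, 0], [U_c, U_s]]`, preserving the `m` quadratic sensing
quantities, all the inner products `h_kᴴ v_j`, and the orthogonality of the sensing
block to the channels (hence the NIC-SINR values). -/
theorem rank_reduction_step_NIC
    (NT K N m : ℕ) (hNT : 1 ≤ NT) (hKN : K < N) (hcount : K ^ 2 + m < N ^ 2)
    (h : Fin K → (Fin NT → ℂ))
    (A : Fin m → Matrix (Fin NT) (Fin NT) ℂ) (hA : ∀ i, (A i).IsHermitian)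
    (vhat : Fin K → (Fin NT → ℂ)) (Vshat : Matrix (Fin NT) (Fin (N - K)) ℂ)
    (horth : ∀ k : Fin K, star (h k) ᵥ* Vshat = 0) :
    ∃ N' : ℕ, K ≤ N' ∧ N' < N ∧
      ∃ (Uc : Matrix (Fin (N - K)) (Fin K) ℂ) (Us : Matrix (Fin (N - K)) (Fin (N' - K)) ℂ),
        (∀ i : Fin m,
          Matrix.trace (A i *
              totalCov (fun k => vhat k + Vshat *ᵥ (fun j => Uc j k)) (Vshat * Us))
            = Matrix.trace (A i * totalCov vhat Vshat)) ∧
        (∀ (k : Fin K) (j : Fin K),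
          star (h k) ⬝ᵥ (vhat j + Vshat *ᵥ (fun i => Uc i j)) = star (h k) ⬝ᵥ vhat j) ∧
        (∀ k : Fin K, star (h k) ᵥ* (Vshat * Us) = 0) := by
  have hcard : Fintype.card (Fin K ⊕ Fin (N - K)) = N := by
    rw [Fintype.card_sum, Fintype.card_fin, Fintype.card_fin, Nat.add_sub_cancel' hKN.le]
  let V := beamMatrix vhat Vshat
  obtain ⟨C, W, htrace⟩ := exists_blockTransform_trace_eq (p := Fin (N - 1 - K))
    (by simpa only [hcard, Fintype.card_fin] using hcount)
    (by simp only [Fintype.card_fin]; omega)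
    (fun i ↦ Vᴴ * A i * V) (fun i ↦ isHermitian_conjTranspose_mul_mul V (hA i))
  refine ⟨N - 1, by omega, by omega, C, W, fun i ↦ ?_, fun k j ↦ ?_, fun k ↦ ?_⟩
  · rw [trace_mul_totalCov, trace_mul_totalCov, ← htrace i, ← beamMatrix_mul_blockTransform,
      conjTranspose_mul]
    simp only [V, Matrix.mul_assoc]
  · rw [dotProduct_add, dotProduct_mulVec, horth k, zero_dotProduct, add_zero]
  · rw [← vecMul_vecMul, horth k, zero_vecMul]

end
end

section
/- Let K ≥ 1, let h_1,…,h_K ∈ ℂ^{N_T}, let γ_1,…,γ_K > 0 and σ² > 0. Suppose R, R_1,…,R_K ∈ ℂ^{N_T×N_T} are positive semidefinite matrices such that R − Σ_{k=1}^K R_k is positive semidefinite and, for every k, (1/γ_k) h_k^H R_k h_k − Σ_{n≠k} h_k^H R_n h_k ≥ σ². Then there exist positive semidefinite matrices R̃_1,…,R̃_K, each of rank at most one, such that R − Σ_{k=1}^K R̃_k is positive semidefinite, h_k^H R̃_k h_k = h_k^H R_k h_k for every k, R_k − R̃_k is positive semidefinite for every k, and (1/γ_k) h_k^H R̃_k h_k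 − Σ_{n≠k} h_k^H R̃_n h_k ≥ σ² for every k. (This is the tightness of the semidefinite relaxation of the interference-cancellation ISAC beamforming problem: any feasible high-rank solution can be replaced by a rank-one solution with the same overall covariance R, hence the same power and the same Bayesian Fisher information.) -/
open Matrix Finset
open scoped ComplexOrder

noncomputable section

/-!
For a positive semidefinite `A` and a vector `v`, let `Q` be the projection onto the span of `v`
that is self-adjoint for the form `⟨x, y⟩ = xᴴ A y`. Both `Q` and `1 - Q` are idempotent and
self-adjoint for this form, so `A Q = Qᴴ A Q` and `A - A Q = (1 - Q)ᴴ A (1 - Q)` are positive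
semidefinite, while `Q v = v` gives `vᴴ A Q v = vᴴ A v`; in the degenerate case `vᴴ A v = 0` one
takes `Q = 0`. Replacing each `R_k` by `R_k Q_k`, with `Q_k` built from `R_k` and `h_k`, thus
preserves every useful signal power and can only decrease the interference and, in the Loewner
order, the sum of the covariances.
-/

section FormProjection

variable {n 𝕜 : Type*} [Fintype n] [Field 𝕜] [StarRing 𝕜]

/-- The projection onto the span of `v` that is self-adjoint for the sesquilinear form of a
Hermitian matrix `A`, used to cut `A` down to a matrix of rank at most one with the same value
at `v`. If `star v ⬝ᵥ A *ᵥ v = 0`, the convention `0⁻¹ = 0` makes it the zero matrix. -/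
def formProjection (A : Matrix n n 𝕜) (v : n → 𝕜) : Matrix n n 𝕜 :=
  (star v ⬝ᵥ A *ᵥ v)⁻¹ • vecMulVec v (star v ᵥ* A)

theorem isIdempotentElem_formProjection (A : Matrix n n 𝕜) (v : n → 𝕜) :
    IsIdempotentElem (formProjection A v) := by
  have inv_mul_inv_mul_self (c : 𝕜) : c⁻¹ * c⁻¹ * c = c⁻¹ := by
    simpa only [inv_inv, mul_right_comm] using mul_inv_mul_cancel c⁻¹
  rw [IsIdempotentElem, formProjection, smul_mul_smul_comm, vecMulVec_mul_vecMulVec,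
    ← dotProduct_mulVec, vecMulVec_smul, smul_smul, inv_mul_inv_mul_self]

theorem conjTranspose_formProjection_mul {A : Matrix n n 𝕜} (hA : A.IsHermitian) (v : n → 𝕜) :
    (formProjection A v)ᴴ * A = A * formProjection A v := by
  have star_form : star (star v ⬝ᵥ A *ᵥ v) = star v ⬝ᵥ A *ᵥ v := by
    rw [← star_dotProduct, star_mulVec, hA.eq, dotProduct_mulVec]
  rw [formProjection, conjTranspose_smul, star_inv₀, star_form, conjTranspose_vecMulVec,
    star_vecMul, star_star, hA.eq, smul_mul_assoc, vecMulVec_mul, mul_smul_comm, mul_vecMulVec]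

theorem rank_formProjection_le_one (A : Matrix n n 𝕜) (v : n → 𝕜) :
    (formProjection A v).rank ≤ 1 := by
  rw [formProjection, ← smul_vecMulVec]
  exact rank_vecMulVec_le _ _

theorem dotProduct_mul_formProjection_mulVec (A : Matrix n n 𝕜) (v : n → 𝕜) :
    star v ⬝ᵥ (A * formProjection A v) *ᵥ v = star v ⬝ᵥ A *ᵥ v := by
  rw [formProjection, mul_smul_comm, mul_vecMulVec, smul_mulVec, vecMulVec_mulVec,
    ← dotProduct_mulVec, op_smul_eq_smul, dotProduct_smul, dotProduct_smul, smul_eq_mul,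
    smul_eq_mul, ← mul_assoc, inv_mul_mul_self]

end FormProjection

section PosSemidef

variable {n : Type*} [Fintype n]

theorem posSemidef_mul_of_isIdempotentElem {R : Type*} [Ring R] [PartialOrder R] [StarRing R]
    {A Q : Matrix n n R} (hA : A.PosSemidef) (hQ : IsIdempotentElem Q) (hQA : Qᴴ * A = A * Q) :
    (A * Q).PosSemidef := by
  have conj_eq : Qᴴ * A * Q = A * Q := by rw [hQA, mul_assoc, hQ.eq]
  exact conj_eq ▸ hA.conjTranspose_mul_mul_same Q

theorem dotProduct_mulVec_le_of_posSemidef_sub {R : Type*} [Ring R] [PartialOrder R] [StarRing R]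
    [AddRightMono R] {A B : Matrix n n R} (hAB : (A - B).PosSemidef) (x : n → R) :
    star x ⬝ᵥ B *ᵥ x ≤ star x ⬝ᵥ A *ᵥ x := by
  simpa only [sub_mulVec, dotProduct_sub, sub_nonneg] using hAB.dotProduct_mulVec_nonneg x

variable {𝕜 : Type*} [Field 𝕜] [PartialOrder 𝕜] [StarRing 𝕜] {A : Matrix n n 𝕜}

theorem posSemidef_mul_formProjection (hA : A.PosSemidef) (v : n → 𝕜) :
    (A * formProjection A v).PosSemidef :=
  posSemidef_mul_of_isIdempotentElem hA (isIdempotentElem_formProjection A v)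
    (conjTranspose_formProjection_mul hA.isHermitian v)

theorem posSemidef_sub_mul_formProjection (hA : A.PosSemidef) (v : n → 𝕜) :
    (A - A * formProjection A v).PosSemidef := by
  classical
  have complement_selfAdjoint :
      (1 - formProjection A v)ᴴ * A = A * (1 - formProjection A v) := by
    rw [conjTranspose_sub, conjTranspose_one, sub_mul, mul_sub, one_mul, mul_one,
      conjTranspose_formProjection_mul hA.isHermitian]
  simpa only [mul_sub, mul_one] using posSemidef_mul_of_isIdempotentElem hA
    (isIdempotentElem_formProjection A v).one_sub complement_selfAdjoint

end PosSemidef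

theorem sdr_tight_IC_general {𝕜 n ι : Type*} [RCLike 𝕜] [Fintype n] [Fintype ι] [DecidableEq ι]
    (h : ι → n → 𝕜) (w σ2 : ι → ℝ) (R : Matrix n n 𝕜) (Rk : ι → Matrix n n 𝕜)
    (hRk : ∀ k, (Rk k).PosSemidef) (hdom : (R - ∑ k, Rk k).PosSemidef)
    (hSINR : ∀ k, σ2 k ≤ w k * RCLike.re (star (h k) ⬝ᵥ Rk k *ᵥ h k)
      - ∑ j ∈ univ.erase k, RCLike.re (star (h k) ⬝ᵥ Rk j *ᵥ h k)) :
    ∃ Rt : ι → Matrix n n 𝕜,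
      (∀ k, (Rt k).PosSemidef) ∧
      (∀ k, (Rt k).rank ≤ 1) ∧
      (R - ∑ k, Rt k).PosSemidef ∧
      (∀ k, star (h k) ⬝ᵥ Rt k *ᵥ h k = star (h k) ⬝ᵥ Rk k *ᵥ h k) ∧
      (∀ k, (Rk k - Rt k).PosSemidef) ∧
      (∀ k, σ2 k ≤ w k * RCLike.re (star (h k) ⬝ᵥ Rt k *ᵥ h k)
        - ∑ j ∈ univ.erase k, RCLike.re (star (h k) ⬝ᵥ Rt j *ᵥ h k)) := by
  let Rt k := Rk k * formProjection (Rk k) (h k)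
  have signal_eq k : star (h k) ⬝ᵥ Rt k *ᵥ h k = star (h k) ⬝ᵥ Rk k *ᵥ h k :=
    dotProduct_mul_formProjection_mulVec (Rk k) (h k)
  have sub_posSemidef k : (Rk k - Rt k).PosSemidef :=
    posSemidef_sub_mul_formProjection (hRk k) (h k)
  have sum_dominated : (R - ∑ k, Rt k).PosSemidef := by
    open scoped MatrixOrder in
    exact (sum_le_sum fun k _ => le_iff.2 (sub_posSemidef k)).trans (le_iff.2 hdom)
  refine ⟨Rt, fun k => posSemidef_mul_formProjection (hRk k) (h k),
    fun k => (rank_mul_le_right _ _).trans (rank_formProjection_le_one _ _),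
    sum_dominated, signal_eq, sub_posSemidef, fun k => ?_⟩
  have interference_le j :
      RCLike.re (star (h k) ⬝ᵥ Rt j *ᵥ h k) ≤ RCLike.re (star (h k) ⬝ᵥ Rk j *ᵥ h k) :=
    RCLike.re_le_re (dotProduct_mulVec_le_of_posSemidef_sub (sub_posSemidef j) (h k))
  rw [signal_eq k]
  exact (hSINR k).trans (sub_le_sub_left (sum_le_sum fun j _ => interference_le j) _)

/-- Tightness of the semidefinite relaxation of the interference-cancellation ISAC
beamforming problem: any feasible solution can be replaced by one where each user's
covariance has rank at most one, keeping the same overall covariance `R`. -/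
theorem sdr_tight_IC
    (NT K : ℕ) (hK : 1 ≤ K)
    (h : Fin K → (Fin NT → ℂ))
    (γ : Fin K → ℝ) (hγ : ∀ k, 0 < γ k)
    (σ2 : ℝ) (hσ2 : 0 < σ2)
    (R : Matrix (Fin NT) (Fin NT) ℂ) (Rk : Fin K → Matrix (Fin NT) (Fin NT) ℂ)
    (hR : R.PosSemidef) (hRk : ∀ k, (Rk k).PosSemidef)
    (hdom : (R - ∑ k, Rk k).PosSemidef)
    (hSINR : ∀ k : Fin K,
      σ2 ≤ (1 / γ k) * (star (h k) ⬝ᵥ (Rk k) *ᵥ h k).re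
            - ∑ n ∈ univ.erase k, (star (h k) ⬝ᵥ (Rk n) *ᵥ h k).re) :
    ∃ Rt : Fin K → Matrix (Fin NT) (Fin NT) ℂ,
      (∀ k, (Rt k).PosSemidef) ∧
      (∀ k, (Rt k).rank ≤ 1) ∧
      (R - ∑ k, Rt k).PosSemidef ∧
      (∀ k, star (h k) ⬝ᵥ (Rt k) *ᵥ h k = star (h k) ⬝ᵥ (Rk k) *ᵥ h k) ∧
      (∀ k, (Rk k - Rt k).PosSemidef) ∧
      (∀ k : Fin K,
        σ2 ≤ (1 / γ k) * (star (h k) ⬝ᵥ (Rt k) *ᵥ h k).re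
              - ∑ n ∈ univ.erase k, (star (h k) ⬝ᵥ (Rt n) *ᵥ h k).re) :=
  sdr_tight_IC_general h (fun k => 1 / γ k) (fun _ => σ2) R Rk hRk hdom hSINR

end
end

section
/- Let A_1,…,A_d ∈ ℂ^{n×n} be Hermitian matrices and let R ∈ ℂ^{n×n} be a positive semidefinite matrix whose rank r satisfies r² > d. Then there exists a positive semidefinite matrix R' ∈ ℂ^{n×n} with rank(R') < r such that Tr(A_i R') = Tr(A_i R) for every i = 1,…,d. (Rank-reduction step for complex semidefinite programs: writing R = V V^H with V ∈ ℂ^{n×r}, one finds a nonzero Hermitian M ∈ ℂ^{r×r} annihilating the d real-linear functionals M ↦ Tr(V^H A_i V M), scales it so that I_r − M is positive semidefinite and singular, and sets R' = V (I_r − M) V^H.) -/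
open Matrix Finset
open scoped ComplexOrder

noncomputable section

/-!
Write `R = V Vᴴ` with `V` having `r = rank R` columns. Every `V (1 - c M) Vᴴ` with `M` Hermitian
and `c` real has rank at most that of `1 - c M`, and it meets the trace constraints as soon as `M`
lies in the kernel of the real-linear map `M ↦ (Tr (Aᵢ V M Vᴴ))ᵢ`. The Hermitian `r × r` matrices
form a real space of dimension `r²`, so `d < r²` gives some `M ≠ 0` in that kernel. Taking for `c⁻¹`
an eigenvalue of `M` of largest absolute value makes `1 - c M` positive semidefinite and singular.
-/

section SelfAdjoint

open ComplexStarModule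

theorem finrank_selfAdjoint_eq_finrank_complex (E : Type*) [AddCommGroup E] [Module ℂ E]
    [FiniteDimensional ℂ E] [StarAddMonoid E] [StarModule ℂ E] :
    Module.finrank ℝ (selfAdjoint E) = Module.finrank ℂ E := by
  have : FiniteDimensional ℝ E := .complexToReal E
  have : FiniteDimensional ℝ (selfAdjoint E) :=
    Module.Finite.of_surjective (realPart (A := E)) realPart_surjective
  let parts : E →ₗ[ℝ] selfAdjoint E × selfAdjoint E := realPart.prod imaginaryPart
  have parts_bijective : Function.Bijective parts := by
    refine ⟨fun x y hxy => ?_, fun ⟨a, b⟩ => ⟨a + Complex.I • (b : E), ?_⟩⟩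
    · obtain ⟨hre, him⟩ := Prod.ext_iff.1 hxy
      exact ComplexStarModule.ext hre him
    · simp [parts]
  have hprod := (LinearEquiv.ofBijective parts parts_bijective).finrank_eq
  rw [finrank_real_of_complex, Module.finrank_prod] at hprod
  lia

end SelfAdjoint

section Factorization

theorem submatrix_mul_submatrix_of_injective {l m n o α : Type*} [Fintype m] [Fintype n]
    [NonUnitalNonAssocSemiring α] {e : m → n} (he : Function.Injective e)
    (A : Matrix l n α) (B : Matrix n o α) (hA : ∀ i, ∀ j ∉ Set.range e, A i j = 0) :
    A.submatrix id e * B.submatrix e id = A * B := by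
  ext i k
  simp only [mul_apply, submatrix_apply, id_eq]
  refine Fintype.sum_of_injective e he _ _ (fun j hj => ?_) fun _ => rfl
  rw [hA i j hj, zero_mul]

variable {𝕜 n : Type*} [RCLike 𝕜] [Fintype n] {R : Matrix n n 𝕜}

/-- The square factor `B = U √D` with `R = B Bᴴ` read off the spectral decomposition `R = U D Uᴴ`
of a positive semidefinite matrix. On a general Hermitian matrix negative eigenvalues are dropped,
their `Real.sqrt` being `0`. -/
def spectralFactor [DecidableEq n] (hR : R.IsHermitian) : Matrix n n 𝕜 :=
  (hR.eigenvectorUnitary : Matrix n n 𝕜) * diagonal fun i => (√(hR.eigenvalues i) : 𝕜)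

theorem spectralFactor_apply_eq_zero [DecidableEq n] (hR : R.IsHermitian) {j : n}
    (hj : hR.eigenvalues j = 0) (i : n) : spectralFactor hR i j = 0 := by
  simp [spectralFactor, hj]

theorem spectralFactor_mul_conjTranspose [DecidableEq n] (hR : R.PosSemidef) :
    spectralFactor hR.isHermitian * (spectralFactor hR.isHermitian)ᴴ = R := by
  have sqrt_mul_star_sqrt (i : n) :
      (√(hR.isHermitian.eigenvalues i) : 𝕜) * star (√(hR.isHermitian.eigenvalues i) : 𝕜) =
        hR.isHermitian.eigenvalues i := by
    rw [RCLike.star_def, RCLike.conj_ofReal, ← RCLike.ofReal_mul,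
      Real.mul_self_sqrt (hR.eigenvalues_nonneg i)]
  have diagonal_mul_conjTranspose :
      (diagonal fun i => (√(hR.isHermitian.eigenvalues i) : 𝕜)) *
        (diagonal fun i => (√(hR.isHermitian.eigenvalues i) : 𝕜))ᴴ =
          diagonal (RCLike.ofReal ∘ hR.isHermitian.eigenvalues) := by
    rw [diagonal_conjTranspose, diagonal_mul_diagonal]
    exact congrArg diagonal (funext sqrt_mul_star_sqrt)
  conv_rhs => rw [hR.isHermitian.spectral_theorem, Unitary.conjStarAlgAut_apply]
  rw [spectralFactor, conjTranspose_mul, Matrix.mul_assoc, ← Matrix.mul_assoc (diagonal _),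
    diagonal_mul_conjTranspose, ← Matrix.mul_assoc, star_eq_conjTranspose]

theorem exists_mul_conjTranspose_eq_of_posSemidef_s14 (hR : R.PosSemidef) :
    ∃ V : Matrix n (Fin R.rank) 𝕜, V * Vᴴ = R := by
  classical
  let nonzeroIndex : Fin R.rank ≃ {i // hR.isHermitian.eigenvalues i ≠ 0} :=
    (Fintype.equivFinOfCardEq hR.isHermitian.rank_eq_card_non_zero_eigs.symm).symm
  let e : Fin R.rank → n := Subtype.val ∘ nonzeroIndex
  have he : Function.Injective e := Subtype.val_injective.comp nonzeroIndex.injective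
  have range_e : Set.range e = {i | hR.isHermitian.eigenvalues i ≠ 0} := by
    rw [nonzeroIndex.surjective.range_comp, Subtype.range_coe_subtype]
  refine ⟨(spectralFactor hR.isHermitian).submatrix id e, ?_⟩
  rw [conjTranspose_submatrix, submatrix_mul_submatrix_of_injective he,
    spectralFactor_mul_conjTranspose hR]
  intro i j hj
  exact spectralFactor_apply_eq_zero hR.isHermitian (by simpa [range_e] using hj) i

end Factorization

section Scaling

variable {𝕜 m : Type*} [RCLike 𝕜] [Fintype m] [DecidableEq m] {M : Matrix m m 𝕜}

theorem one_sub_smul_eq_conjStarAlgAut_diagonal (hM : M.IsHermitian) (c : ℝ) :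
    1 - c • M = Unitary.conjStarAlgAut 𝕜 _ hM.eigenvectorUnitary
      (diagonal fun i => ((1 - c * hM.eigenvalues i : ℝ) : 𝕜)) := by
  have hdiag : (diagonal fun i => ((1 - c * hM.eigenvalues i : ℝ) : 𝕜)) =
      1 - (c : 𝕜) • diagonal (RCLike.ofReal ∘ hM.eigenvalues) := by
    rw [← diagonal_one, ← diagonal_smul, diagonal_sub]
    simp
  rw [hdiag, map_sub, map_one, map_smul, ← hM.spectral_theorem,
    RCLike.real_smul_eq_coe_smul (K := 𝕜)]

theorem posSemidef_one_sub_smul (hM : M.IsHermitian) {c : ℝ}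
    (hc : ∀ i, c * hM.eigenvalues i ≤ 1) : (1 - c • M).PosSemidef := by
  rw [one_sub_smul_eq_conjStarAlgAut_diagonal hM, Unitary.conjStarAlgAut_apply]
  refine (PosSemidef.diagonal fun i => ?_).mul_mul_conjTranspose_same _
  exact RCLike.ofReal_nonneg.2 (sub_nonneg.2 (hc i))

theorem rank_one_sub_smul_lt_card (hM : M.IsHermitian) {c : ℝ} {i : m}
    (hi : c * hM.eigenvalues i = 1) : (1 - c • M).rank < Fintype.card m := by
  rw [one_sub_smul_eq_conjStarAlgAut_diagonal hM, Unitary.conjStarAlgAut_apply]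
  refine ((rank_mul_le_left _ _).trans (rank_mul_le_right _ _)).trans_lt ?_
  rw [rank_diagonal]
  exact Fintype.card_subtype_lt (x := i) (by simp [hi])

theorem exists_posSemidef_one_sub_smul_rank_lt (hM : M.IsHermitian) (hM₀ : M ≠ 0) :
    ∃ c : ℝ, (1 - c • M).PosSemidef ∧ (1 - c • M).rank < Fintype.card m := by
  obtain ⟨j, hj⟩ : ∃ j, hM.eigenvalues j ≠ 0 :=
    Function.ne_iff.1 (mt hM.eigenvalues_eq_zero_iff.1 hM₀)
  obtain ⟨k, -, abs_le⟩ :=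
    exists_max_image univ (fun i => |hM.eigenvalues i|) ⟨j, mem_univ j⟩
  have hk : hM.eigenvalues k ≠ 0 :=
    abs_pos.1 ((abs_pos.2 hj).trans_le (abs_le j (mem_univ j)))
  refine ⟨(hM.eigenvalues k)⁻¹, posSemidef_one_sub_smul hM fun i => ?_,
    rank_one_sub_smul_lt_card hM (inv_mul_cancel₀ hk)⟩
  calc (hM.eigenvalues k)⁻¹ * hM.eigenvalues i
      ≤ |hM.eigenvalues k|⁻¹ * |hM.eigenvalues i| := by
        rw [← abs_inv, ← abs_mul]
        exact le_abs_self _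
    _ ≤ 1 := inv_mul_le_one_of_le₀ (abs_le i (mem_univ i)) (abs_nonneg _)

end Scaling

section RankReduction

variable {𝕜 n : Type*} [RCLike 𝕜] [Fintype n]

theorem exists_posSemidef_rank_lt_card_map_eq {m W : Type*} [Fintype m] [AddCommGroup W]
    [Module ℝ W] [FiniteDimensional ℝ W] (L : Matrix n n 𝕜 →ₗ[ℝ] W) (V : Matrix n m 𝕜)
    (hW : Module.finrank ℝ W < Module.finrank ℝ (selfAdjoint (Matrix m m 𝕜))) :
    ∃ R' : Matrix n n 𝕜, R'.PosSemidef ∧ R'.rank < Fintype.card m ∧ L R' = L (V * Vᴴ) := by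
  classical
  let congruence : Matrix m m 𝕜 →ₗ[ℝ] Matrix n n 𝕜 :=
    mulRightLinearMap n ℝ Vᴴ ∘ₗ mulLeftLinearMap m ℝ V
  obtain ⟨M, hLM, hM₀⟩ := (Submodule.ne_bot_iff _).1 <| LinearMap.ker_ne_bot_of_finrank_lt
    (f := L ∘ₗ congruence ∘ₗ (selfAdjoint.submodule ℝ (Matrix m m 𝕜)).subtype) hW
  obtain ⟨c, hpos, hrank⟩ := exists_posSemidef_one_sub_smul_rank_lt
    (show (M : Matrix m m 𝕜).IsHermitian from M.2) (by simpa using hM₀)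
  refine ⟨congruence (1 - c • M), hpos.mul_mul_conjTranspose_same V,
    ((rank_mul_le_left _ _).trans (rank_mul_le_right _ _)).trans_lt hrank, ?_⟩
  have hL : L (congruence M) = 0 := hLM
  have hone : congruence 1 = V * Vᴴ := by simp [congruence]
  rw [map_sub, map_smul, map_sub, map_smul, hL, smul_zero, sub_zero, hone]

theorem ofReal_re_trace_mul {A B : Matrix n n 𝕜} (hA : A.IsHermitian) (hB : B.IsHermitian) :
    (RCLike.re (trace (A * B)) : 𝕜) = trace (A * B) := by
  rw [← RCLike.conj_eq_iff_re, starRingEnd_apply, ← trace_conjTranspose, conjTranspose_mul,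
    hA.eq, hB.eq, trace_mul_comm]

theorem sdp_rank_reduction_general {ι : Type*} [Fintype ι] {A : ι → Matrix n n 𝕜}
    (hA : ∀ i, (A i).IsHermitian) {R : Matrix n n 𝕜} (hR : R.PosSemidef)
    (hrank : Fintype.card ι <
      Module.finrank ℝ (selfAdjoint (Matrix (Fin R.rank) (Fin R.rank) 𝕜))) :
    ∃ R' : Matrix n n 𝕜, R'.PosSemidef ∧ R'.rank < R.rank ∧
      ∀ i, trace (A i * R') = trace (A i * R) := by
  obtain ⟨V, hV⟩ := exists_mul_conjTranspose_eq_of_posSemidef_s14 hR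
  let traces : Matrix n n 𝕜 →ₗ[ℝ] ι → ℝ := LinearMap.pi fun i =>
    RCLike.reLm ∘ₗ traceLinearMap n ℝ 𝕜 ∘ₗ LinearMap.mulLeft ℝ (A i)
  obtain ⟨R', hR', hlt, htraces⟩ :=
    exists_posSemidef_rank_lt_card_map_eq traces V (by simpa using hrank)
  rw [hV] at htraces
  refine ⟨R', hR', by simpa using hlt, fun i => ?_⟩
  have hre : RCLike.re (trace (A i * R')) = RCLike.re (trace (A i * R)) := congrFun htraces i
  rw [← ofReal_re_trace_mul (hA i) hR'.isHermitian, hre, ofReal_re_trace_mul (hA i) hR.isHermitian]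

end RankReduction

/-- Rank-reduction step for complex semidefinite programs: if `R` is positive
semidefinite with `(rank R)² > d`, then there is a positive semidefinite `R'` of
strictly smaller rank matching the `d` trace quantities `Tr(Aᵢ R)`. -/
theorem sdp_rank_reduction
    (n d : ℕ)
    (A : Fin d → Matrix (Fin n) (Fin n) ℂ) (hA : ∀ i, (A i).IsHermitian)
    (R : Matrix (Fin n) (Fin n) ℂ) (hR : R.PosSemidef)
    (hrank : d < R.rank ^ 2) :
    ∃ R' : Matrix (Fin n) (Fin n) ℂ, R'.PosSemidef ∧ R'.rank < R.rank ∧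
      ∀ i : Fin d, Matrix.trace (A i * R') = Matrix.trace (A i * R) :=
  sdp_rank_reduction_general hA hR (by
    simpa [finrank_selfAdjoint_eq_finrank_complex, Module.finrank_matrix, ← sq] using hrank)

end
end

section
/- Let P > 0, a > 0 and b > 0 be real numbers with b − a > 2a². Then there exist real numbers β₁, β₂ > 0 with β₁ + β₂ ≤ P such that 2/β₁ + 1/(a β₁ + b β₂) < 2/P + 1/(a P). (This shows that, for estimating the complex path loss and angle of arrival of a single line-of-sight target with classical Cramér–Rao objective, splitting the transmit power between the steering direction a_T(θ) and its derivative direction ȧ_T(θ) strictly beats allocating all power along a_T(θ) whenever ‖ȧ_T(θ)‖² − ‖ȧ_R(θ)‖² > 2‖ȧ_R(θ)‖⁴; hence two beamformers are necessary and one beamformer is not sufficient in this regime.) -/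
/-!
Move a small amount `s` of power from `a_T` to `ȧ_T`. The path-loss term `2/β₁` grows at the rate
`2/P²`, while the angle term `1/(aβ₁ + bβ₂)` decreases at the rate `(b - a)/(aP)²`. The second rate
dominates exactly when `b - a > 2a²`, so in that case every small enough shift lowers the objective.
-/

open Filter Topology

section PowerSplitting

variable {𝕜 : Type*} [Field 𝕜]

/-- The trace of the inverse Fisher information matrix for the path loss and the angle, as a
function of the powers `β₁` along `a_T` and `β₂` along `ȧ_T`, where `a = ‖ȧ_R‖²` and `b = ‖ȧ_T‖²`.
It is meaningful only where `β₁` and `a * β₁ + b * β₂` are nonzero. -/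
def crbTrace (a b β₁ β₂ : 𝕜) : 𝕜 :=
  2 / β₁ + 1 / (a * β₁ + b * β₂)

/-- The decrease of `crbTrace` per unit of power when `s` out of the total power `P` is moved from
`a_T` to `ȧ_T`. The factor `s` is already cancelled, so that the value at `s = 0` is the
marginal gain at the single-beamformer point. -/
def powerShiftGain (a b P s : 𝕜) : 𝕜 :=
  (b - a) / (a * P * (a * (P - s) + b * s)) - 2 / (P * (P - s))

theorem crbTrace_sub_crbTrace_shift {a b P s : 𝕜} (ha : a ≠ 0) (hP : P ≠ 0)
    (hPs : P - s ≠ 0) (hden : a * (P - s) + b * s ≠ 0) :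
    crbTrace a b P 0 - crbTrace a b (P - s) s = s * powerShiftGain a b P s := by
  have path_loss : 2 / P - 2 / (P - s) = -(s * (2 / (P * (P - s)))) := by
    rw [div_sub_div _ _ hP hPs]
    ring
  have angle : 1 / (a * P) - 1 / (a * (P - s) + b * s) =
      s * ((b - a) / (a * P * (a * (P - s) + b * s))) := by
    rw [div_sub_div _ _ (mul_ne_zero ha hP) hden]
    ring
  simp only [crbTrace, powerShiftGain, mul_zero, add_zero]
  linear_combination path_loss + angle

theorem powerShiftGain_zero {a P : 𝕜} (ha : a ≠ 0) (hP : P ≠ 0) (b : 𝕜) :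
    powerShiftGain a b P 0 = (b - a - 2 * a ^ 2) / (a * P) ^ 2 := by
  simp only [powerShiftGain, sub_zero, mul_zero, add_zero]
  field_simp

theorem continuousAt_powerShiftGain_zero [TopologicalSpace 𝕜] [IsTopologicalDivisionRing 𝕜]
    {a P : 𝕜} (ha : a ≠ 0) (hP : P ≠ 0) (b : 𝕜) :
    ContinuousAt (powerShiftGain a b P) 0 := by
  unfold powerShiftGain
  fun_prop (disch := simp [ha, hP])

variable [LinearOrder 𝕜] [IsStrictOrderedRing 𝕜]

theorem eventually_crbTrace_shift_lt [TopologicalSpace 𝕜] [OrderTopology 𝕜] {a b P : 𝕜}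
    (ha : a ≠ 0) (hP : P ≠ 0) (hgap : 2 * a ^ 2 < b - a) :
    ∀ᶠ s in 𝓝[>] 0, crbTrace a b (P - s) s < crbTrace a b P 0 := by
  have gain_pos : ∀ᶠ s in 𝓝 0, 0 < powerShiftGain a b P s := by
    refine (continuousAt_powerShiftGain_zero ha hP b).eventually_const_lt ?_
    rw [powerShiftGain_zero ha hP]
    exact div_pos (sub_pos.2 hgap) (by positivity)
  have path_loss_ne : ∀ᶠ s in 𝓝 0, P - s ≠ 0 :=
    ContinuousAt.eventually_ne (by fun_prop) (by simpa using hP)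
  have angle_ne : ∀ᶠ s in 𝓝 0, a * (P - s) + b * s ≠ 0 :=
    ContinuousAt.eventually_ne (by fun_prop) (by simp [ha, hP])
  filter_upwards [self_mem_nhdsWithin, gain_pos.filter_mono nhdsWithin_le_nhds,
    path_loss_ne.filter_mono nhdsWithin_le_nhds, angle_ne.filter_mono nhdsWithin_le_nhds]
    with s hs hgain hPs hden
  rw [← sub_pos, crbTrace_sub_crbTrace_shift ha hP hPs hden]
  exact mul_pos hs hgain

theorem two_beams_beat_one_general {a b P : 𝕜} (hP : 0 < P) (ha : a ≠ 0)
    (hgap : 2 * a ^ 2 < b - a) :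
    ∃ β₁ β₂ : 𝕜, 0 < β₁ ∧ 0 < β₂ ∧ β₁ + β₂ ≤ P ∧ crbTrace a b β₁ β₂ < crbTrace a b P 0 := by
  let _ := Preorder.topology 𝕜
  have : OrderTopology 𝕜 := ⟨rfl⟩
  obtain ⟨s, hlt, hs, hsP⟩ :=
    ((eventually_crbTrace_shift_lt ha hP.ne' hgap).and (Ioo_mem_nhdsGT hP)).exists
  exact ⟨P - s, s, sub_pos.2 hsP, hs, (sub_add_cancel P s).le, hlt⟩

end PowerSplitting

/-- Splitting the transmit power between the steering direction and its derivative
direction strictly beats allocating all power along the steering direction whenever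
`b − a > 2a²` (with `a = ‖ȧ_R‖²`, `b = ‖ȧ_T‖²`): there exist `β₁, β₂ > 0` with
`β₁ + β₂ ≤ P` such that `2/β₁ + 1/(aβ₁ + bβ₂) < 2/P + 1/(aP)`. Hence two beamformers
are necessary for jointly estimating the path loss and angle of a single target. -/
theorem two_beams_beat_one
    (P a b : ℝ) (hP : 0 < P) (ha : 0 < a) (hb : 0 < b)
    (hgap : 2 * a ^ 2 < b - a) :
    ∃ β1 β2 : ℝ, 0 < β1 ∧ 0 < β2 ∧ β1 + β2 ≤ P ∧
      2 / β1 + 1 / (a * β1 + b * β2) < 2 / P + 1 / (a * P) := by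
  simpa only [crbTrace, mul_zero, add_zero] using two_beams_beat_one_general hP ha.ne' hgap
end
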